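/- For all non-negative integers n and r with n ≥ r, one has 2^r · r! · S_B(n,r) = Σ_{k=0}^{r} A_B(n,k) · C(n−k, r−k), where C(a,b) denotes the binomial coefficient. -/

import Mathlib

open Classical Finset

/-! ### Signed permutations (type B), window notation -/

/-- `w` is the window notation of a signed permutation of `{1,…,n}`. -/
def IsSignedPerm {n : ℕ} (w : Fin n → ℤ) : Prop :=
  (∀ i, 1 ≤ |w i| ∧ |w i| ≤ (n : ℤ)) ∧ Function.Injective fun i => |w i|

/-- The value `β(i)` for `1 ≤ i ≤ n`, and `0` otherwise (so `β(0) = 0`). -/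
def bVal {n : ℕ} (w : Fin n → ℤ) (i : ℕ) : ℤ :=
  if h : 1 ≤ i ∧ i ≤ n then w ⟨i - 1, by omega⟩ else 0

/-- Type `B` descent number: `#{i ∈ {0,…,n−1} : β(i) > β(i+1)}`, with `β(0) = 0`. -/
noncomputable def desB {n : ℕ} (w : Fin n → ℤ) : ℕ :=
  ((Finset.range n).filter fun i => bVal w (i + 1) < bVal w i).card

/-- Type `B` Eulerian number `A_B(n,k)`. -/
noncomputable def EulB (n k : ℕ) : ℕ :=
  Nat.card { w : Fin n → ℤ // IsSignedPerm w ∧ desB w = k }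

/-- Type `D` descent number: as in type `B` but with the convention `γ(0) = −γ(2)`. -/
noncomputable def desD {n : ℕ} (w : Fin n → ℤ) : ℕ :=
  ((Finset.range n).filter fun i =>
    bVal w (i + 1) < (if i = 0 then -(bVal w 2) else bVal w i)).card

/-- `w` has an even number of negative entries. -/
def IsEvenSigned {n : ℕ} (w : Fin n → ℤ) : Prop :=
  Even ((Finset.univ.filter fun i => w i < 0)).card

/-- Type `D` Eulerian number `A_D(n,k)`. -/
noncomputable def EulD (n k : ℕ) : ℕ :=
  Nat.card { w : Fin n → ℤ // IsSignedPerm w ∧ IsEvenSigned w ∧ desD w = k }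

/-! ### Set partitions of types B and D -/

/-- The negative `−C` of a block `C`. -/
def negSet (C : Finset ℤ) : Finset ℤ := C.image fun x => -x

/-- A `Bₙ`-partition: a set partition of `{−n,…,−1,1,…,n}` such that at most one block
satisfies `C = −C` (the zero-block), and `−C` is a block whenever `C` is. -/
structure BPartition (n : ℕ) where
  blocks : Finset (Finset ℤ)
  cover : ∀ x : ℤ, (x ≠ 0 ∧ |x| ≤ (n : ℤ)) ↔ ∃ C ∈ blocks, x ∈ C
  nonempty : ∀ C ∈ blocks, C.Nonempty
  disj : ∀ C ∈ blocks, ∀ C' ∈ blocks, C ≠ C' → Disjoint C C'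
  closed : ∀ C ∈ blocks, negSet C ∈ blocks
  zeroUnique : ∀ C ∈ blocks, ∀ C' ∈ blocks, negSet C = C → negSet C' = C' → C = C'

/-- A `Dₙ`-partition: a `Bₙ`-partition whose zero-block, if present, has at least
two positive elements. -/
def IsDPartition {n : ℕ} (P : BPartition n) : Prop :=
  ∀ C ∈ P.blocks, negSet C = C → 2 ≤ (C.filter fun x => 0 < x).card

/-- `P` has exactly `r` pairs `{C, −C}` of nonzero blocks. -/
def hasPairs {n : ℕ} (P : BPartition n) (r : ℕ) : Prop :=
  (P.blocks.filter fun C => negSet C ≠ C).card = 2 * r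

/-- Stirling number of the second kind of type `B`. -/
noncomputable def SB (n r : ℕ) : ℕ :=
  Nat.card { P : BPartition n // hasPairs P r }

/-- Stirling number of the second kind of type `D`. -/
noncomputable def SD (n r : ℕ) : ℕ :=
  Nat.card { P : BPartition n // IsDPartition P ∧ hasPairs P r }

/-- An ordered `Bₙ`-partition: a `Bₙ`-partition with a linear order on its blocks in
which the zero-block (if present) comes first and `C, −C` are always adjacent. -/
structure OrderedBPartition (n : ℕ) where
  P : BPartition n
  order : List (Finset ℤ)
  nodup : order.Nodup
  same : order.toFinset = P.blocks
  zeroFirst : ∀ C ∈ P.blocks, negSet C = C → order[0]? = some C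
  adjacent : ∀ C ∈ P.blocks, negSet C ≠ C →
    ∃ i : ℕ, (order[i]? = some C ∧ order[i+1]? = some (negSet C)) ∨
             (order[i]? = some (negSet C) ∧ order[i+1]? = some C)

/-! ### Classical Stirling and Eulerian numbers -/

/-- The classical Stirling number of the second kind `S(n,r)`. -/
noncomputable def Stir (n r : ℕ) : ℕ :=
  Nat.card { P : Finpartition (Finset.univ : Finset (Fin n)) // P.parts.card = r }

/-- Number of descents of a permutation of `{1,…,n}`. -/
noncomputable def desA {n : ℕ} (σ : Equiv.Perm (Fin n)) : ℕ :=
  ((Finset.range (n - 1)).filter fun i =>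
    ∃ h : i + 1 < n, σ ⟨i + 1, h⟩ < σ ⟨i, Nat.lt_of_succ_lt h⟩).card

/-- The classical Eulerian number `A(n,k)`: permutations with `k−1` descents
(and `A(n,0) = 0`). -/
noncomputable def EulA (n k : ℕ) : ℕ :=
  if k = 0 then 0 else Nat.card { σ : Equiv.Perm (Fin n) // desA σ = k - 1 }

/-! ### Colored permutations -/

/-- `π` is (the window notation of) a colored permutation in `G_{m,n}`. -/
def IsColoredPerm {m n : ℕ} (π : Fin n → Fin n × ZMod m) : Prop :=
  Function.Bijective fun i => (π i).1

/-- The color order `a ≺ b` on the colored alphabet. -/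
def colorLt {m n : ℕ} (a b : Fin n × ZMod m) : Prop :=
  b.2.val < a.2.val ∨ (a.2 = b.2 ∧ a.1 < b.1)

/-- The descent number `des_G` of a colored permutation. -/
noncomputable def desG {m n : ℕ} (π : Fin n → Fin n × ZMod m) : ℕ :=
  ((Finset.range (n - 1)).filter fun i =>
    ∃ h : i + 1 < n, colorLt (π ⟨i + 1, h⟩) (π ⟨i, Nat.lt_of_succ_lt h⟩)).card
  + (if h : 0 < n then (if (π ⟨0, h⟩).2 ≠ 0 then 1 else 0) else 0)

/-- The Eulerian number `A_m(n,k)` of `G_{m,n}`. -/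
noncomputable def EulG (m n k : ℕ) : ℕ :=
  Nat.card { π : Fin n → Fin n × ZMod m // IsColoredPerm π ∧ desG π = k }

/-- The shift `C^{[t]}` of a block of the colored alphabet. -/
def shiftBlock {m n : ℕ} (t : ZMod m) (C : Finset (Fin n × ZMod m)) :
    Finset (Fin n × ZMod m) :=
  C.image fun p => (p.1, p.2 + t)

/-- A `G_{m,n}`-partition. -/
structure GPartition (m n : ℕ) where
  blocks : Finset (Finset (Fin n × ZMod m))
  cover : ∀ x : Fin n × ZMod m, ∃ C ∈ blocks, x ∈ C
  nonempty : ∀ C ∈ blocks, C.Nonempty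
  disj : ∀ C ∈ blocks, ∀ C' ∈ blocks, C ≠ C' → Disjoint C C'
  closed : ∀ C ∈ blocks, shiftBlock 1 C ∈ blocks
  zeroUnique : ∀ C ∈ blocks, ∀ C' ∈ blocks,
    shiftBlock 1 C = C → shiftBlock 1 C' = C' → C = C'

/-- The number of equivalence classes (orbits under shifting) of nonzero blocks. -/
noncomputable def numClasses {m n : ℕ} (P : GPartition m n) : ℕ :=
  ((P.blocks.filter fun C => shiftBlock 1 C ≠ C).image
    fun C => (Finset.range m).image fun t => shiftBlock (t : ZMod m) C).card

/-- Stirling number of the second kind `S_m(n,r)` for `G_{m,n}`. -/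
noncomputable def SG (m n r : ℕ) : ℕ :=
  Nat.card { P : GPartition m n // numClasses P = r }

/-- An ordered `G_{m,n}`-partition. -/
structure OrderedGPartition (m n : ℕ) where
  P : GPartition m n
  order : List (Finset (Fin n × ZMod m))
  nodup : order.Nodup
  same : order.toFinset = P.blocks
  zeroFirst : ∀ C ∈ P.blocks, shiftBlock 1 C = C → order[0]? = some C
  consec : ∀ C ∈ P.blocks, shiftBlock 1 C ≠ C →
    ∃ i : ℕ, ∃ s : ZMod m, ∀ t : ℕ, t < m →
      order[i + t]? = some (shiftBlock (s + (t : ZMod m)) C)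

/-!
Both sides count the ordered `Bₙ`-partitions with `r` pairs `±C` of nonzero blocks, encoded as odd
functions `f` from the letters onto `{−r, …, r}` (zero being attained at `0`): the `j`-th pair is
`f⁻¹(j), f⁻¹(−j)`. A `Bₙ`-partition with `r` pairs can be ordered in `2 ^ r * r!` ways, which gives
the left-hand side. On the other hand, the `n` letters of positive weight, when `x` has weight
`(f x, x)` in the lexicographic order, appear in increasing order as the window of a signed
permutation. Marking the `r` places where `f` jumps by bars, one gets every signed permutation with
`r` bars among its `n` positions such that each descent carries a bar, and `f` is recovered by
counting bars. A signed permutation with `k` descents admits `(n - k).choose (r - k)` such choices.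
-/

/-! ### Signed rankings -/

section OddExtension

variable {ι α M : Type*}

/-- A family of sets in which no element occurs, up to sign, in two positions; in particular no
member contains both `x` and `-x`. -/
structure IsSignedDisjoint [Neg α] (a : ι → Finset α) : Prop where
  eq_of_mem {i j : ι} {x : α} : x ∈ a i → x ∈ a j → i = j
  neg_notMem {i j : ι} {x : α} : x ∈ a i → -x ∉ a j

/-- For signed-disjoint `a`, the odd function with value `c i` on `a i` that vanishes off the sets
`±a i`. -/
noncomputable def oddExtension [Fintype ι] [Neg α] [AddCommGroup M] (a : ι → Finset α) (c : ι → M)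
    (x : α) : M :=
  ∑ i, ((if x ∈ a i then c i else 0) - if -x ∈ a i then c i else 0)

variable [Fintype ι] [InvolutiveNeg α] [AddCommGroup M] {a : ι → Finset α} {c : ι → M}

lemma oddExtension_odd (a : ι → Finset α) (c : ι → M) : (oddExtension a c).Odd := by
  intro x
  simp [oddExtension]

lemma oddExtension_of_mem (ha : IsSignedDisjoint a) {i : ι} {x : α} (hx : x ∈ a i) :
    oddExtension a c x = c i := by
  have hneg (j : ι) : -x ∉ a j := ha.neg_notMem hx
  have hmem (j : ι) : x ∈ a j ↔ i = j := ⟨ha.eq_of_mem hx, fun h => h ▸ hx⟩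
  simp [oddExtension, hneg, hmem]

lemma oddExtension_of_neg_mem (ha : IsSignedDisjoint a) {i : ι} {x : α} (hx : -x ∈ a i) :
    oddExtension a c x = -c i := by
  rw [← oddExtension_of_mem (c := c) ha hx, oddExtension_odd, neg_neg]

lemma oddExtension_of_notMem {x : α} (hx : ∀ i, x ∉ a i) (hneg : ∀ i, -x ∉ a i) :
    oddExtension a c x = 0 := by
  simp [oddExtension, hx, hneg]

lemma oddExtension_cases (ha : IsSignedDisjoint a) (c : ι → M) (x : α) :
    (∃ i, x ∈ a i ∧ oddExtension a c x = c i) ∨ (∃ i, -x ∈ a i ∧ oddExtension a c x = -c i) ∨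
      (∀ i, x ∉ a i ∧ -x ∉ a i) ∧ oddExtension a c x = 0 := by
  by_cases hx : ∃ i, x ∈ a i
  · exact .inl <| hx.imp fun i hi => ⟨hi, oddExtension_of_mem ha hi⟩
  by_cases hneg : ∃ i, -x ∈ a i
  · exact .inr <| .inl <| hneg.imp fun i hi => ⟨hi, oddExtension_of_neg_mem ha hi⟩
  push Not at hx hneg
  exact .inr <| .inr ⟨fun i => ⟨hx i, hneg i⟩, oddExtension_of_notMem hx hneg⟩

lemma oddExtension_eq (ha : IsSignedDisjoint a) {f : α → M} (hf : f.Odd)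
    (hmem : ∀ i, ∀ x ∈ a i, f x = c i) (hzero : ∀ x, (∀ i, x ∉ a i ∧ -x ∉ a i) → f x = 0) :
    oddExtension a c = f := by
  funext x
  rcases oddExtension_cases ha c x with ⟨i, hi, h⟩ | ⟨i, hi, h⟩ | ⟨hx, h⟩
  · rw [h, hmem i x hi]
  · rw [h, ← hmem i (-x) hi, hf, neg_neg]
  · rw [h, hzero x hx]

end OddExtension

/-- The alphabet `{−n, …, −1, 1, …, n}`. -/
noncomputable def letters (n : ℕ) : Finset ℤ := (Finset.Icc (-n : ℤ) n).erase 0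

lemma mem_letters {n : ℕ} {x : ℤ} : x ∈ letters n ↔ x ≠ 0 ∧ |x| ≤ n := by
  rw [letters, mem_erase, mem_Icc, abs_le]

lemma neg_mem_letters {n : ℕ} {x : ℤ} : -x ∈ letters n ↔ x ∈ letters n := by
  rw [mem_letters, mem_letters, neg_ne_zero, abs_neg]

lemma add_one_mem_letters {n : ℕ} (j : Fin n) : (j : ℤ) + 1 ∈ letters n := by
  rw [mem_letters, abs_of_pos (by omega)]
  omega

lemma card_letters (n : ℕ) : #(letters n) = 2 * n := by
  rw [letters, card_erase_of_mem (by simp), Int.card_Icc]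
  omega

section SignedRanking

/-- An odd function on the letters `±1, …, ±n`, extended by zero to `ℤ`, with range `{−r, …, r}`. It
encodes an ordered `Bₙ`-partition with `r` pairs of nonzero blocks: the `j`-th pair is `f⁻¹(j)`,
`f⁻¹(−j)`, in this order, and the zero-block consists of the letters at which `f` vanishes. -/
structure IsSignedRanking (n r : ℕ) (f : ℤ → ℤ) : Prop where
  odd : f.Odd
  support_subset : Function.support f ⊆ letters n
  range_eq : Set.range f = Set.Icc (-r : ℤ) r

variable {n r : ℕ} {f : ℤ → ℤ}

lemma IsSignedRanking.eq_zero_of_notMem (hf : IsSignedRanking n r f) {x : ℤ}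
    (hx : x ∉ letters n) : f x = 0 :=
  Function.notMem_support.1 fun h => hx (hf.support_subset h)

lemma IsSignedRanking.mem_letters (hf : IsSignedRanking n r f) {x : ℤ} (hx : f x ≠ 0) :
    x ∈ letters n :=
  hf.support_subset hx

lemma IsSignedRanking.abs_le (hf : IsSignedRanking n r f) (x : ℤ) : |f x| ≤ r :=
  _root_.abs_le.2 (hf.range_eq.subset (Set.mem_range_self x))

lemma IsSignedRanking.exists_eq (hf : IsSignedRanking n r f) {v : ℤ} (hv : |v| ≤ r) :
    ∃ x, f x = v :=
  hf.range_eq.superset (_root_.abs_le.1 hv)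

lemma isSignedRanking_oddExtension {ι : Type*} [Fintype ι] {a : ι → Finset ℤ} {c : ι → ℤ}
    (ha : IsSignedDisjoint a) (hletters : ∀ i, a i ⊆ letters n) (hne : ∀ i, (a i).Nonempty)
    (hc : Set.range c ⊆ Set.Icc 0 (r : ℤ)) (hc' : Set.Icc 1 (r : ℤ) ⊆ Set.range c) :
    IsSignedRanking n r (oddExtension a c) := by
  have hodd := oddExtension_odd a c
  refine ⟨hodd, fun x hx => ?_, Set.Subset.antisymm ?_ fun v hv => ?_⟩
  · contrapose! hx
    refine Function.notMem_support.2 (oddExtension_of_notMem (fun i hi => hx (hletters i hi)) ?_)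
    exact fun i hi => hx (neg_mem_letters.1 (hletters i hi))
  · rintro _ ⟨x, rfl⟩
    have hbounds (i : ι) : 0 ≤ c i ∧ c i ≤ r := hc (Set.mem_range_self i)
    rw [Set.mem_Icc]
    rcases oddExtension_cases ha c x with ⟨i, -, h⟩ | ⟨i, -, h⟩ | ⟨-, h⟩
    · have := hbounds i
      omega
    · have := hbounds i
      omega
    · omega
  · have hpos (u : ℤ) (hu : u ∈ Set.Icc 1 (r : ℤ)) : ∃ x, oddExtension a c x = u := by
      obtain ⟨i, rfl⟩ := hc' hu
      obtain ⟨x, hx⟩ := hne i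
      exact ⟨x, oddExtension_of_mem ha hx⟩
    rw [Set.mem_Icc] at hv
    rcases lt_trichotomy v 0 with hv0 | rfl | hv0
    · obtain ⟨x, hx⟩ := hpos (-v) ⟨by omega, by omega⟩
      exact ⟨-x, by rw [hodd, hx, neg_neg]⟩
    · exact ⟨0, hodd.map_zero⟩
    · exact hpos v ⟨by omega, hv.2⟩

end SignedRanking

/-! ### Signed permutations sorted by a weight -/

section SignedPerm

variable {n : ℕ} {w : Fin n → ℤ}

namespace IsSignedPerm

lemma mem_letters (hw : IsSignedPerm w) (i : Fin n) : w i ∈ letters n :=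
  _root_.mem_letters.2 ⟨abs_pos.1 (hw.1 i).1, (hw.1 i).2⟩

lemma injective (hw : IsSignedPerm w) : Function.Injective w :=
  .of_comp (f := abs) hw.2

lemma isSignedDisjoint_singleton (hw : IsSignedPerm w) :
    IsSignedDisjoint fun i => ({w i} : Finset ℤ) where
  eq_of_mem hi hj := by
    rw [mem_singleton] at hi hj
    exact hw.injective (hi.symm.trans hj)
  neg_notMem {i j x} hi hj := by
    rw [mem_singleton] at hi hj
    subst hi
    obtain rfl : i = j := hw.2 (by simp [← hj])
    have := (_root_.mem_letters.1 (hw.mem_letters i)).1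
    omega

lemma exists_eq_or_eq_neg (hw : IsSignedPerm w) {x : ℤ} (hx : x ∈ letters n) :
    ∃ i, x = w i ∨ x = -w i := by
  have himage : univ.image (fun i => |w i|) = Finset.Icc 1 (n : ℤ) := by
    refine eq_of_subset_of_card_le (image_subset_iff.2 fun i _ => mem_Icc.2 (hw.1 i)) ?_
    simp [card_image_of_injective _ hw.2]
  rw [_root_.mem_letters] at hx
  have hmem : |x| ∈ univ.image fun i => |w i| :=
    himage ▸ mem_Icc.2 ⟨Int.one_le_abs hx.1, hx.2⟩
  obtain ⟨i, -, hi⟩ := mem_image.1 hmem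
  exact ⟨i, abs_eq_abs.1 hi.symm⟩

end IsSignedPerm

lemma bVal_zero (w : Fin n → ℤ) : bVal w 0 = 0 := by
  simp [bVal]

lemma bVal_succ (w : Fin n → ℤ) (i : Fin n) : bVal w (i + 1) = w i := by
  simp [bVal]

lemma bVal_cases (w : Fin n → ℤ) {m : ℕ} (hm : m ≤ n) :
    m = 0 ∧ bVal w m = 0 ∨ ∃ i : Fin n, m = i + 1 ∧ bVal w m = w i := by
  rcases m with - | m
  · exact .inl ⟨rfl, bVal_zero w⟩
  · exact .inr ⟨⟨m, hm⟩, rfl, bVal_succ w ⟨m, hm⟩⟩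

lemma IsSignedPerm.injOn_bVal (hw : IsSignedPerm w) : Set.InjOn (bVal w) (Set.Iic n) := by
  have hne (i : Fin n) : w i ≠ 0 := (_root_.mem_letters.1 (hw.mem_letters i)).1
  intro a ha b hb hab
  rcases bVal_cases w ha with ⟨ha, h⟩ | ⟨i, ha, h⟩ <;>
    rcases bVal_cases w hb with ⟨hb, h'⟩ | ⟨j, hb, h'⟩ <;> rw [h, h'] at hab
  · rw [ha, hb]
  · exact absurd hab.symm (hne j)
  · exact absurd hab (hne i)
  · rw [ha, hb, hw.injective hab]

section Sorting

variable {L : Type*} {κ : ℤ → L}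

/-- The letters of positive weight: one from each pair `{x, −x}` when the weight is odd and
injective. -/
noncomputable def posLetters [Zero L] [LT L] (n : ℕ) (κ : ℤ → L) : Finset ℤ :=
  {x ∈ letters n | 0 < κ x}

lemma mem_posLetters [Zero L] [LT L] {x : ℤ} : x ∈ posLetters n κ ↔ x ∈ letters n ∧ 0 < κ x :=
  mem_filter

variable [AddCommGroup L] [LinearOrder L] [IsOrderedAddMonoid L]

lemma strictMonoOn_comp_bVal_iff (hκ : κ.Odd) :
    StrictMonoOn (κ ∘ bVal w) (Set.Iic n) ↔ (∀ i, 0 < κ (w i)) ∧ StrictMono (κ ∘ w) := by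
  constructor
  · refine fun h => ⟨fun i => ?_, fun i j hij => ?_⟩
    · simpa [bVal_zero, bVal_succ, hκ.map_zero] using
        h (Set.mem_Iic.2 n.zero_le) (Set.mem_Iic.2 i.2) (Nat.succ_pos i)
    · simpa [bVal_succ] using
        h (Set.mem_Iic.2 i.2) (Set.mem_Iic.2 j.2) (Nat.succ_lt_succ hij)
  · rintro ⟨hpos, hmono⟩ a ha b hb hab
    rw [Function.comp_apply, Function.comp_apply]
    rcases bVal_cases w hb with ⟨rfl, -⟩ | ⟨j, rfl, h'⟩
    · omega
    rcases bVal_cases w ha with ⟨rfl, h⟩ | ⟨i, rfl, h⟩ <;> rw [h, h']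
    · rw [hκ.map_zero]
      exact hpos j
    · exact hmono (Fin.lt_def.2 (by omega))

lemma eq_of_mem_posLetters_of_abs_eq (hκ : κ.Odd) {x y : ℤ} (hx : x ∈ posLetters n κ)
    (hy : y ∈ posLetters n κ) (h : |x| = |y|) : x = y := by
  rcases abs_eq_abs.1 h with h | rfl
  · exact h
  · have hpos := (mem_posLetters.1 hx).2
    rw [hκ, neg_pos] at hpos
    exact absurd hpos (mem_posLetters.1 hy).2.not_gt

lemma card_posLetters (n : ℕ) (hκ : κ.Odd) (hinj : Function.Injective κ) :
    #(posLetters n κ) = n := by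
  have himage : (posLetters n κ).image abs = Finset.Icc 1 (n : ℤ) := by
    ext v
    simp only [mem_image, mem_posLetters, mem_letters, mem_Icc]
    constructor
    · rintro ⟨x, ⟨⟨hx, hxn⟩, -⟩, rfl⟩
      exact ⟨Int.one_le_abs hx, hxn⟩
    · rintro ⟨hv, hvn⟩
      have hne : κ v ≠ 0 := fun h => by
        have := hinj (h.trans hκ.map_zero.symm)
        omega
      have habs : |v| = v := abs_of_pos (by omega)
      rcases hne.lt_or_gt with hneg | hpos
      · refine ⟨-v, ⟨⟨by omega, by rwa [abs_neg, habs]⟩, ?_⟩, by rw [abs_neg, habs]⟩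
        rwa [hκ, neg_pos]
      · exact ⟨v, ⟨⟨by omega, by rwa [habs]⟩, hpos⟩, habs⟩
  rw [← card_image_of_injOn fun x hx y hy => eq_of_mem_posLetters_of_abs_eq hκ hx hy, himage]
  simp

lemma IsSignedPerm.image_eq_posLetters (hw : IsSignedPerm w) (hκ : κ.Odd)
    (hinj : Function.Injective κ) (hpos : ∀ i, 0 < κ (w i)) :
    univ.image w = posLetters n κ := by
  refine eq_of_subset_of_card_le
    (image_subset_iff.2 fun i _ => mem_posLetters.2 ⟨hw.mem_letters i, hpos i⟩) ?_
  simp [card_posLetters n hκ hinj, card_image_of_injective _ hw.injective]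

theorem existsUnique_isSignedPerm_strictMonoOn (n : ℕ) (hκ : κ.Odd)
    (hinj : Function.Injective κ) :
    ∃! w : Fin n → ℤ, IsSignedPerm w ∧ StrictMonoOn (κ ∘ bVal w) (Set.Iic n) := by
  simp only [strictMonoOn_comp_bVal_iff hκ]
  have hcard : #((posLetters n κ).image κ) = n := by
    rw [card_image_of_injective _ hinj, card_posLetters n hκ hinj]
  set e := ((posLetters n κ).image κ).orderEmbOfFin hcard
  have hmem (i : Fin n) : ∃ x ∈ posLetters n κ, κ x = e i :=
    mem_image.1 (orderEmbOfFin_mem _ hcard i)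
  choose w hw hwe using hmem
  have hmono : StrictMono (κ ∘ w) := fun i j hij => by simpa [hwe] using hij
  have hperm : IsSignedPerm w := by
    refine ⟨fun i => ?_, fun i j hij => ?_⟩
    · have hi := mem_letters.1 (mem_posLetters.1 (hw i)).1
      exact ⟨Int.one_le_abs hi.1, hi.2⟩
    · exact hmono.injective (congrArg κ (eq_of_mem_posLetters_of_abs_eq hκ (hw i) (hw j) hij))
  have hpos (i : Fin n) : 0 < κ (w i) := (mem_posLetters.1 (hw i)).2
  refine ⟨w, ⟨hperm, hpos, hmono⟩, ?_⟩
  rintro w' ⟨hperm', hpos', hmono'⟩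
  have himage : univ.image w' = univ.image w := by
    rw [hperm'.image_eq_posLetters hκ hinj hpos', hperm.image_eq_posLetters hκ hinj hpos]
  have hrange : Set.range w' = Set.range w := by
    simpa using congrArg (fun s : Finset ℤ => (s : Set ℤ)) himage
  have hrange' : Set.range (κ ∘ w') = Set.range (κ ∘ w) := by
    rw [Set.range_comp, Set.range_comp, hrange]
  exact hinj.comp_left ((hmono'.range_inj hmono).1 hrange')

end Sorting

end SignedPerm

/-! ### Barred permutations -/

section Ascents

variable {n : ℕ}

lemma count_mem_eq_card {T : Finset ℕ} (hT : T ⊆ range n) : Nat.count (· ∈ T) n = #T := by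
  rw [Nat.count_eq_card_filter_range, filter_mem_eq_inter, inter_eq_right.2 hT]

lemma exists_count_succ_eq (T : Finset ℕ) {v : ℕ} (hv : v < #T) :
    ∃ t ∈ T, Nat.count (· ∈ T) (t + 1) = v + 1 := by
  have hcard (hf : (Set.ofPred (· ∈ T)).Finite) : v < #hf.toFinset := by
    convert hv
    ext
    simp
  exact ⟨Nat.nth (· ∈ T) v, Nat.nth_mem v hcard, Nat.count_nth_succ hcard⟩

/-- The ascent set of `u 0, …, u n`. -/
noncomputable def ascents (n : ℕ) (u : ℕ → ℤ) : Finset ℕ := {t ∈ range n | u t < u (t + 1)}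

lemma mem_ascents {u : ℕ → ℤ} {t : ℕ} : t ∈ ascents n u ↔ t < n ∧ u t < u (t + 1) := by
  rw [ascents, mem_filter, mem_range]

lemma eq_ascents_of_count_eq {T : Finset ℕ} (hT : T ⊆ range n) {u : ℕ → ℤ}
    (hu : ∀ m ≤ n, u m = Nat.count (· ∈ T) m) : T = ascents n u := by
  ext t
  rw [mem_ascents]
  by_cases ht : t < n
  · rw [hu t ht.le, hu (t + 1) ht, Nat.cast_lt, Nat.count_lt_count_succ_iff, and_iff_right ht]
  · exact iff_of_false (fun h => ht (mem_range.1 (hT h))) fun h => ht h.1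

lemma eq_add_count_ascents {u : ℕ → ℤ} (hmono : MonotoneOn u (Set.Iic n))
    (hgapless : ∀ v, u 0 ≤ v → v ≤ u n → ∃ m ≤ n, u m = v) {m : ℕ} (hm : m ≤ n) :
    u m = u 0 + Nat.count (· ∈ ascents n u) m := by
  have hle {a b : ℕ} (hab : a ≤ b) (hb : b ≤ n) : u a ≤ u b :=
    hmono (Set.mem_Iic.2 (hab.trans hb)) (Set.mem_Iic.2 hb) hab
  induction m with
  | zero => simp
  | succ m ih =>
    specialize ih (by omega)
    rw [Nat.count_succ]
    have hstep : u m ≤ u (m + 1) := hle m.le_succ hm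
    by_cases hasc : u m < u (m + 1)
    · have hsmall : u (m + 1) ≤ u m + 1 := by
        by_contra! hjump
        obtain ⟨k, hk, huk⟩ := hgapless (u m + 1) (by have := hle m.zero_le (by omega); omega)
          (by have := hle hm le_rfl; omega)
        rcases le_or_gt k m with hkm | hmk
        · have := hle hkm (by omega)
          omega
        · have : u (m + 1) ≤ u k := hle hmk hk
          omega
      rw [if_pos (mem_ascents.2 ⟨hm, hasc⟩)]
      push_cast
      omega
    · rw [if_neg fun h => hasc (mem_ascents.1 h).2]
      omega

end Ascents

section BarredPerm

variable {n r : ℕ} {w : Fin n → ℤ} {T : Finset ℕ} {f : ℤ → ℤ}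

/-- The type `B` descent set, so that `desB w` is its cardinality. -/
noncomputable def descents (w : Fin n → ℤ) : Finset ℕ :=
  {i ∈ range n | bVal w (i + 1) < bVal w i}

/-- A signed permutation `w` with bars at `r` of the positions `0, …, n − 1` (position `i` lies
between `w(i)` and `w(i + 1)`), where every descent carries a bar. -/
structure IsBarredPerm (r : ℕ) (w : Fin n → ℤ) (T : Finset ℕ) : Prop where
  isSignedPerm : IsSignedPerm w
  descents_subset : descents w ⊆ T
  subset_range : T ⊆ range n
  card_eq : #T = r

/-- The signed ranking attached to a barred permutation: the rank of `w(m)` is the number of bars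
to its left. -/
noncomputable def barRank (w : Fin n → ℤ) (T : Finset ℕ) : ℤ → ℤ :=
  oddExtension (fun i => {w i}) fun i => (Nat.count (· ∈ T) (i + 1) : ℤ)

lemma barRank_bVal (hw : IsSignedPerm w) (T : Finset ℕ) {m : ℕ} (hm : m ≤ n) :
    barRank w T (bVal w m) = Nat.count (· ∈ T) m := by
  rcases bVal_cases w hm with ⟨rfl, h⟩ | ⟨i, rfl, h⟩ <;> rw [h]
  · simpa using (oddExtension_odd _ _).map_zero
  · exact oddExtension_of_mem hw.isSignedDisjoint_singleton (mem_singleton_self _)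

lemma IsBarredPerm.isSignedRanking_barRank (h : IsBarredPerm r w T) :
    IsSignedRanking n r (barRank w T) := by
  refine isSignedRanking_oddExtension h.isSignedPerm.isSignedDisjoint_singleton
    (fun i => singleton_subset_iff.2 (h.isSignedPerm.mem_letters i))
    (fun i => singleton_nonempty _) ?_ fun v hv => ?_
  · rintro _ ⟨i, rfl⟩
    have hle := Nat.count_monotone (· ∈ T) (Nat.succ_le_of_lt i.2)
    rw [count_mem_eq_card h.subset_range, h.card_eq] at hle
    exact ⟨Nat.cast_nonneg _, Nat.cast_le.2 hle⟩
  · rw [Set.mem_Icc, ← h.card_eq] at hv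
    obtain ⟨t, ht, hcount⟩ := exists_count_succ_eq T (v := (v - 1).toNat) (by omega)
    exact ⟨⟨t, mem_range.1 (h.subset_range ht)⟩, by dsimp only; omega⟩

/-- The weight sorting letters by rank, and letters of equal rank by size. -/
def lexKey (f : ℤ → ℤ) (x : ℤ) : ℤ ×ₗ ℤ := toLex (f x, x)

lemma lexKey_lt_lexKey {x y : ℤ} :
    lexKey f x < lexKey f y ↔ f x < f y ∨ f x = f y ∧ x < y :=
  Prod.Lex.toLex_lt_toLex

lemma lexKey_odd (hf : f.Odd) : (lexKey f).Odd := fun x => by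
  rw [lexKey, hf]
  rfl

lemma lexKey_injective (f : ℤ → ℤ) : Function.Injective (lexKey f) := fun _ _ h =>
  congrArg (fun p => (ofLex p).2) h

lemma IsBarredPerm.strictMonoOn_lexKey (h : IsBarredPerm r w T) :
    StrictMonoOn (lexKey (barRank w T) ∘ bVal w) (Set.Iic n) := by
  refine strictMonoOn_of_lt_succ Set.ordConnected_Iic fun t _ ht ht' => ?_
  rw [Order.succ_eq_add_one] at ht' ⊢
  rw [Function.comp_apply, Function.comp_apply, lexKey_lt_lexKey,
    barRank_bVal h.isSignedPerm T ht, barRank_bVal h.isSignedPerm T ht', Nat.cast_lt,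
    Nat.count_lt_count_succ_iff]
  by_cases hbar : t ∈ T
  · exact .inl hbar
  · have hdesc : ¬ bVal w (t + 1) < bVal w t := fun hlt =>
      hbar (h.descents_subset (mem_filter.2 ⟨mem_range.2 ht', hlt⟩))
    have hne : bVal w t ≠ bVal w (t + 1) := fun heq =>
      t.lt_succ_self.ne (h.isSignedPerm.injOn_bVal ht ht' heq)
    exact .inr ⟨by simp [Nat.count_succ, hbar], by omega⟩

lemma IsBarredPerm.eq_of_barRank_eq {w' : Fin n → ℤ} {T' : Finset ℕ} (h : IsBarredPerm r w T)
    (h' : IsBarredPerm r w' T') (heq : barRank w T = barRank w' T') : w = w' ∧ T = T' := by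
  have hodd := h.isSignedRanking_barRank.odd
  obtain rfl : w = w' :=
    (existsUnique_isSignedPerm_strictMonoOn n (lexKey_odd hodd) (lexKey_injective _)).unique
      ⟨h.isSignedPerm, h.strictMonoOn_lexKey⟩
      ⟨h'.isSignedPerm, heq ▸ h'.strictMonoOn_lexKey⟩
  have hT := eq_ascents_of_count_eq h.subset_range fun m hm =>
    barRank_bVal h.isSignedPerm T hm
  have hT' := eq_ascents_of_count_eq h'.subset_range fun m hm =>
    barRank_bVal h'.isSignedPerm T' hm
  exact ⟨rfl, by rw [hT, hT', heq]⟩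

lemma IsSignedRanking.exists_bVal_eq (hf : IsSignedRanking n r f) (hw : IsSignedPerm w)
    (hmono : StrictMonoOn (lexKey f ∘ bVal w) (Set.Iic n)) {v : ℤ} (hv : 0 ≤ v) (hvr : v ≤ r) :
    ∃ m ≤ n, f (bVal w m) = v := by
  rcases hv.eq_or_lt with rfl | hv
  · exact ⟨0, n.zero_le, by rw [bVal_zero, hf.odd.map_zero]⟩
  obtain ⟨x, rfl⟩ := hf.exists_eq (v := v) (by rwa [abs_of_pos hv])
  have hkey := lexKey_odd hf.odd
  have hpos : 0 < lexKey f x := by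
    rw [← hkey.map_zero, lexKey_lt_lexKey, hf.odd.map_zero]
    exact .inl hv
  have hx : x ∈ univ.image w := by
    rw [hw.image_eq_posLetters hkey (lexKey_injective f)
      ((strictMonoOn_comp_bVal_iff hkey).1 hmono).1]
    exact mem_posLetters.2 ⟨hf.mem_letters hv.ne', hpos⟩
  obtain ⟨i, -, rfl⟩ := mem_image.1 hx
  exact ⟨i + 1, i.2, by rw [bVal_succ]⟩

lemma descents_subset_ascents_of_lexKey (hmono : StrictMonoOn (lexKey f ∘ bVal w) (Set.Iic n)) :
    descents w ⊆ ascents n (f ∘ bVal w) := by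
  intro t ht
  rw [descents, mem_filter, mem_range] at ht
  have hlt := lexKey_lt_lexKey.1 (hmono (Set.mem_Iic.2 ht.1.le) (Set.mem_Iic.2 ht.1) t.lt_succ_self)
  exact mem_ascents.2 ⟨ht.1, hlt.resolve_right fun h => h.2.not_gt ht.2⟩

lemma IsSignedRanking.exists_barRank_eq (hf : IsSignedRanking n r f) :
    ∃ (w : Fin n → ℤ) (T : Finset ℕ), IsBarredPerm r w T ∧ barRank w T = f := by
  obtain ⟨w, hw, hmono⟩ := (existsUnique_isSignedPerm_strictMonoOn n (lexKey_odd hf.odd)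
    (lexKey_injective f)).exists
  set u := f ∘ bVal w with hu
  have hu0 : u 0 = 0 := by rw [hu, Function.comp_apply, bVal_zero, hf.odd.map_zero]
  have hur (m : ℕ) : u m ≤ r := (le_abs_self _).trans (hf.abs_le _)
  have humono : MonotoneOn u (Set.Iic n) := fun a ha b hb hab =>
    (Prod.Lex.toLex_le_toLex.1 (hmono.monotoneOn ha hb hab)).elim le_of_lt fun h => h.1.le
  have hattained {v : ℤ} (hv : 0 ≤ v) (hvr : v ≤ r) := hf.exists_bVal_eq hw hmono hv hvr
  have hcount {m : ℕ} (hm : m ≤ n) : u m = Nat.count (· ∈ ascents n u) m := by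
    rw [eq_add_count_ascents humono (fun v hv hvn => hattained (hu0 ▸ hv) (hvn.trans (hur n))) hm,
      hu0, zero_add]
  have hun : u n = r := by
    obtain ⟨m, hm, hmr⟩ := hattained (Nat.cast_nonneg r) le_rfl
    exact (hur n).antisymm (hmr ▸ humono (Set.mem_Iic.2 hm) (Set.mem_Iic.2 le_rfl) hm)
  have hrange : ascents n u ⊆ range n := filter_subset _ _
  refine ⟨w, ascents n u, ⟨hw, descents_subset_ascents_of_lexKey hmono, hrange, ?_⟩, ?_⟩
  · rw [← Nat.cast_inj (R := ℤ), ← hun, hcount le_rfl, count_mem_eq_card hrange]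
  · refine oddExtension_eq hw.isSignedDisjoint_singleton hf.odd (fun i x hx => ?_) fun x hx => ?_
    · rw [mem_singleton.1 hx, ← hcount i.2, hu, Function.comp_apply, bVal_succ]
    · refine hf.eq_zero_of_notMem fun hmem => ?_
      simp only [mem_singleton] at hx
      obtain ⟨i, hi | hi⟩ := hw.exists_eq_or_eq_neg hmem
      · exact (hx i).1 hi
      · exact (hx i).2 (neg_eq_iff_eq_neg.2 hi)

theorem card_isBarredPerm_eq_card_isSignedRanking (n r : ℕ) :
    Nat.card {p : (Fin n → ℤ) × Finset ℕ // IsBarredPerm r p.1 p.2} =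
      Nat.card {f // IsSignedRanking n r f} := by
  refine Nat.card_eq_of_bijective (fun p => ⟨_, p.2.isSignedRanking_barRank⟩)
    ⟨fun p q h => ?_, fun ⟨f, hf⟩ => ?_⟩
  · obtain ⟨hw, hT⟩ := p.2.eq_of_barRank_eq q.2 (congrArg Subtype.val h)
    exact Subtype.ext (Prod.ext hw hT)
  · obtain ⟨w, T, h, rfl⟩ := hf.exists_barRank_eq
    exact ⟨⟨(w, T), h⟩, rfl⟩

/-- The finite set of signed permutations of `{1, …, n}`, in window notation. -/
noncomputable def signedPerms (n : ℕ) : Finset (Fin n → ℤ) :=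
  {w ∈ Fintype.piFinset fun _ => letters n | IsSignedPerm w}

lemma mem_signedPerms : w ∈ signedPerms n ↔ IsSignedPerm w := by
  rw [signedPerms, mem_filter, Fintype.mem_piFinset, and_iff_right_iff_imp]
  exact IsSignedPerm.mem_letters

lemma card_desB_eq_EulB (n k : ℕ) : #{w ∈ signedPerms n | desB w = k} = EulB n k :=
  (Nat.subtype_card _ fun w => by rw [mem_filter, mem_signedPerms]).symm

lemma card_bars (r : ℕ) (w : Fin n → ℤ) :
    #{T ∈ (range n).powersetCard r | descents w ⊆ T} =
      if desB w ≤ r then (n - desB w).choose (r - desB w) else 0 := by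
  split_ifs with hr
  · have hcard := card_filter_powersetCard_subset (descents w) (range n) r (filter_subset _ _) hr
    rwa [card_range] at hcard
  · rw [card_eq_zero, filter_eq_empty_iff]
    exact fun T hT hsub => hr ((card_le_card hsub).trans_eq (mem_powersetCard.1 hT).2)

theorem card_isBarredPerm (n r : ℕ) :
    Nat.card {p : (Fin n → ℤ) × Finset ℕ // IsBarredPerm r p.1 p.2} =
      ∑ k ∈ range (r + 1), EulB n k * (n - k).choose (r - k) := by
  have hbarred (p : (Fin n → ℤ) × Finset ℕ) :
      p ∈ {p ∈ signedPerms n ×ˢ (range n).powersetCard r | descents p.1 ⊆ p.2} ↔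
        IsBarredPerm r p.1 p.2 := by
    rw [mem_filter, mem_product, mem_signedPerms, mem_powersetCard]
    exact ⟨fun ⟨⟨hw, hT, hr⟩, hD⟩ => ⟨hw, hD, hT, hr⟩, fun ⟨hw, hD, hT, hr⟩ => ⟨⟨hw, hT, hr⟩, hD⟩⟩
  calc Nat.card {p : (Fin n → ℤ) × Finset ℕ // IsBarredPerm r p.1 p.2}
      = ∑ w ∈ signedPerms n, #{T ∈ (range n).powersetCard r | descents w ⊆ T} := by
        simp only [Nat.subtype_card _ hbarred, card_filter, sum_product]
    _ = ∑ w ∈ signedPerms n with desB w ≤ r, (n - desB w).choose (r - desB w) := by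
        simp only [card_bars, sum_filter]
    _ = ∑ k ∈ range (r + 1), ∑ w ∈ signedPerms n with desB w = k, (n - k).choose (r - k) := by
        rw [← sum_fiberwise_of_maps_to (t := range (r + 1)) (g := desB) fun w hw => by
          rw [mem_range]; exact Nat.lt_succ_of_le (mem_filter.1 hw).2]
        refine sum_congr rfl fun k hk => ?_
        have hfilter : {w ∈ {w ∈ signedPerms n | desB w ≤ r} | desB w = k} =
            {w ∈ signedPerms n | desB w = k} := by
          rw [filter_filter]
          exact filter_congr fun w _ => and_iff_right_of_imp fun h =>
            h.trans_le (Nat.lt_succ_iff.1 (mem_range.1 hk))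
        rw [hfilter]
        exact sum_congr rfl fun w hw => by rw [(mem_filter.1 hw).2]
    _ = ∑ k ∈ range (r + 1), EulB n k * (n - k).choose (r - k) := by
        simp only [sum_const, card_desB_eq_EulB, smul_eq_mul]

end BarredPerm

/-! ### Listings of the nonzero blocks -/

theorem card_injective_comp {ι α β : Type*} [Fintype ι] [DecidableEq β] (M : Finset α)
    (q : α → β) {m : ℕ} (hm : ∀ x ∈ M, #{y ∈ M | q y = q x} = m) :
    Nat.card {a : ι → α // (∀ i, a i ∈ M) ∧ Function.Injective fun i => q (a i)} =
      (#(M.image q)).descFactorial (Fintype.card ι) * m ^ Fintype.card ι := by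
  let lift (p : Σ e : ι ↪ ↥(M.image q), ∀ i, ↥({y ∈ M | q y = e i} : Finset α)) :
      {a : ι → α // (∀ i, a i ∈ M) ∧ Function.Injective fun i => q (a i)} :=
    ⟨fun i => p.2 i, fun i => (mem_filter.1 (p.2 i).2).1, fun i j hij => p.1.injective <|
      Subtype.ext <| by rwa [← (mem_filter.1 (p.2 i).2).2, ← (mem_filter.1 (p.2 j).2).2]⟩
  have hlift : Function.Bijective lift := by
    refine ⟨?_, fun ⟨a, ha, hinj⟩ => ?_⟩
    · rintro ⟨e, a⟩ ⟨e', a'⟩ h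
      have hval (i : ι) : (a i : α) = a' i := congrFun (congrArg Subtype.val h) i
      obtain rfl : e = e' := by
        ext i
        rw [← (mem_filter.1 (a i).2).2, hval, (mem_filter.1 (a' i).2).2]
      obtain rfl : a = a' := funext fun i => Subtype.ext (hval i)
      rfl
    · exact ⟨⟨⟨fun i => ⟨q (a i), mem_image_of_mem q (ha i)⟩,
        fun i j hij => hinj (congrArg Subtype.val hij)⟩, fun i => ⟨a i, mem_filter.2 ⟨ha i, rfl⟩⟩⟩,
        rfl⟩
  have hfibre (y : ↥(M.image q)) : #{x ∈ M | q x = y} = m := by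
    obtain ⟨x, hx, hxy⟩ := mem_image.1 y.2
    rw [← hxy, hm x hx]
  rw [← Nat.card_eq_of_bijective lift hlift, Nat.card_eq_fintype_card, Fintype.card_sigma]
  simp [hfibre, Fintype.card_embedding_eq]

lemma mem_negSet {C : Finset ℤ} {x : ℤ} : x ∈ negSet C ↔ -x ∈ C := by
  simp [negSet, neg_eq_iff_eq_neg]

lemma negSet_negSet (C : Finset ℤ) : negSet (negSet C) = C := by
  ext x
  rw [mem_negSet, mem_negSet, neg_neg]

/-- The unordered pair `{C, −C}`. -/
noncomputable def blockPair (C : Finset ℤ) : Sym2 (Finset ℤ) := s(C, negSet C)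

lemma blockPair_eq_iff {C D : Finset ℤ} : blockPair C = blockPair D ↔ C = D ∨ C = negSet D := by
  rw [blockPair, blockPair, Sym2.eq_iff]
  constructor
  · exact Or.imp And.left And.left
  · rintro (rfl | rfl)
    · exact .inl ⟨rfl, rfl⟩
    · exact .inr ⟨rfl, negSet_negSet D⟩

namespace BPartition

variable {n r : ℕ} {P : BPartition n} {C D : Finset ℤ} {a : Fin r → Finset ℤ} {f : ℤ → ℤ}

lemma blocks_injective : Function.Injective (blocks (n := n)) := by
  rintro ⟨⟩ ⟨⟩ rfl
  rfl

lemma mem_letters (hC : C ∈ P.blocks) {x : ℤ} (hx : x ∈ C) : x ∈ letters n :=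
  _root_.mem_letters.2 ((P.cover x).2 ⟨C, hC, hx⟩)

lemma exists_mem_block (P : BPartition n) {x : ℤ} (hx : x ∈ letters n) : ∃ C ∈ P.blocks, x ∈ C :=
  (P.cover x).1 (_root_.mem_letters.1 hx)

lemma eq_of_mem (hC : C ∈ P.blocks) (hD : D ∈ P.blocks) {x : ℤ} (hxC : x ∈ C) (hxD : x ∈ D) :
    C = D := by
  by_contra hne
  exact disjoint_left.1 (P.disj C hC D hD hne) hxC hxD

instance : Finite (BPartition n) :=
  .of_injective
    (fun P => (⟨P.blocks, mem_powerset.2 fun _ hC => mem_powerset.2 fun _ => P.mem_letters hC⟩ :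
      ↥(letters n).powerset.powerset))
    fun _ _ h => blocks_injective (congrArg Subtype.val h)

/-- The blocks of `P` other than the zero-block. -/
noncomputable def nonzeroBlocks (P : BPartition n) : Finset (Finset ℤ) :=
  {C ∈ P.blocks | negSet C ≠ C}

lemma mem_nonzeroBlocks : C ∈ P.nonzeroBlocks ↔ C ∈ P.blocks ∧ negSet C ≠ C :=
  mem_filter

lemma negSet_mem_nonzeroBlocks (hC : C ∈ P.nonzeroBlocks) : negSet C ∈ P.nonzeroBlocks := by
  rw [mem_nonzeroBlocks] at hC ⊢
  exact ⟨P.closed C hC.1, by rw [negSet_negSet]; exact hC.2.symm⟩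

lemma hasPairs_iff : hasPairs P r ↔ #P.nonzeroBlocks = 2 * r := Iff.rfl

lemma card_filter_blockPair_eq (hC : C ∈ P.nonzeroBlocks) :
    #{D ∈ P.nonzeroBlocks | blockPair D = blockPair C} = 2 := by
  have hpair : {D ∈ P.nonzeroBlocks | blockPair D = blockPair C} = {C, negSet C} := by
    ext D
    rw [mem_filter, blockPair_eq_iff, mem_insert, mem_singleton, and_iff_right_iff_imp]
    rintro (rfl | rfl)
    · exact hC
    · exact negSet_mem_nonzeroBlocks hC
  rw [hpair, card_pair (mem_nonzeroBlocks.1 hC).2.symm]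

lemma card_image_blockPair (hP : hasPairs P r) : #(P.nonzeroBlocks.image blockPair) = r := by
  have hsum := card_eq_sum_card_image blockPair P.nonzeroBlocks
  have hfibre : ∀ p ∈ P.nonzeroBlocks.image blockPair,
      #{D ∈ P.nonzeroBlocks | blockPair D = p} = 2 :=
    forall_mem_image.2 fun _ => card_filter_blockPair_eq
  rw [hasPairs_iff.1 hP, sum_congr rfl hfibre, sum_const, smul_eq_mul] at hsum
  omega

/-- `a` lists one block from each of `r` distinct pairs `{C, −C}` of nonzero blocks. -/
structure IsListing (P : BPartition n) (a : Fin r → Finset ℤ) : Prop where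
  mem (j : Fin r) : a j ∈ P.nonzeroBlocks
  injective : Function.Injective fun j => blockPair (a j)

theorem card_isListing (hP : hasPairs P r) :
    Nat.card {a : Fin r → Finset ℤ // P.IsListing a} = 2 ^ r * r.factorial := by
  have hlisting (a : Fin r → Finset ℤ) : P.IsListing a ↔
      (∀ j, a j ∈ P.nonzeroBlocks) ∧ Function.Injective fun j => blockPair (a j) :=
    ⟨fun h => ⟨h.mem, h.injective⟩, fun h => ⟨h.1, h.2⟩⟩
  rw [Nat.card_congr (Equiv.subtypeEquivRight hlisting),
    card_injective_comp _ _ fun _ hC => P.card_filter_blockPair_eq hC, card_image_blockPair hP,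
    Fintype.card_fin, Nat.descFactorial_self, mul_comm]

/-- A `Bₙ`-partition with `r` pairs of nonzero blocks, together with an order of these pairs and an
order within each of them; the listing `a` names the first block of each pair. -/
abbrev Listed (n r : ℕ) : Type :=
  Σ P : {P : BPartition n // hasPairs P r}, {a : Fin r → Finset ℤ // P.1.IsListing a}

theorem card_listed (n r : ℕ) : Nat.card (Listed n r) = 2 ^ r * r.factorial * SB n r := by
  have := Fintype.ofFinite {P : BPartition n // hasPairs P r}
  have hcard (P : {P : BPartition n // hasPairs P r}) :
      Nat.card {a : Fin r → Finset ℤ // P.1.IsListing a} = 2 ^ r * r.factorial :=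
    card_isListing P.2
  have hfinite (P : {P : BPartition n // hasPairs P r}) :
      Finite {a : Fin r → Finset ℤ // P.1.IsListing a} :=
    Nat.finite_of_card_ne_zero (by rw [hcard]; positivity)
  rw [Nat.card_sigma, sum_congr rfl fun P _ => hcard P, sum_const, card_univ,
    ← Nat.card_eq_fintype_card, smul_eq_mul, mul_comm, SB]

namespace IsListing

lemma mem_blocks (ha : P.IsListing a) (j : Fin r) : a j ∈ P.blocks :=
  (mem_nonzeroBlocks.1 (ha.mem j)).1

lemma isSignedDisjoint (ha : P.IsListing a) : IsSignedDisjoint a where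
  eq_of_mem {i j x} hi hj :=
    ha.injective (congrArg blockPair (P.eq_of_mem (ha.mem_blocks i) (ha.mem_blocks j) hi hj))
  neg_notMem {i j x} hi hj := by
    have heq : a i = negSet (a j) :=
      P.eq_of_mem (ha.mem_blocks i) (P.closed _ (ha.mem_blocks j)) hi (mem_negSet.2 hj)
    obtain rfl : i = j := ha.injective (blockPair_eq_iff.2 (.inr heq))
    exact (mem_nonzeroBlocks.1 (ha.mem i)).2 heq.symm

lemma exists_eq_or_eq_negSet (ha : P.IsListing a) (hP : hasPairs P r) (hC : C ∈ P.nonzeroBlocks) :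
    ∃ j, C = a j ∨ C = negSet (a j) := by
  have himage : univ.image (fun j => blockPair (a j)) = P.nonzeroBlocks.image blockPair := by
    refine eq_of_subset_of_card_le
      (image_subset_iff.2 fun j _ => mem_image_of_mem blockPair (ha.mem j)) ?_
    rw [card_image_blockPair hP, card_image_of_injective _ ha.injective, card_fin]
  obtain ⟨j, -, hj⟩ := mem_image.1 (himage.superset (mem_image_of_mem blockPair hC))
  exact ⟨j, blockPair_eq_iff.1 hj.symm⟩

end IsListing

end BPartition

section Levels

variable {n r : ℕ} {f : ℤ → ℤ} {v : ℤ}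

/-- The letters at which `f` takes the value `v`. -/
noncomputable def level (n : ℕ) (f : ℤ → ℤ) (v : ℤ) : Finset ℤ := {x ∈ letters n | f x = v}

lemma mem_level {x : ℤ} : x ∈ level n f v ↔ x ∈ letters n ∧ f x = v := mem_filter

lemma negSet_level (n : ℕ) (hf : f.Odd) (v : ℤ) : negSet (level n f v) = level n f (-v) := by
  ext x
  rw [mem_negSet, mem_level, mem_level, neg_mem_letters, hf, neg_eq_iff_eq_neg]

lemma eq_of_level_eq {u : ℤ} (hne : (level n f u).Nonempty) (h : level n f u = level n f v) :
    u = v := by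
  obtain ⟨x, hx⟩ := hne
  exact (mem_level.1 hx).2.symm.trans (mem_level.1 (h ▸ hx)).2

lemma level_nonempty {x : ℤ} (hx : x ∈ letters n) : (level n f (f x)).Nonempty :=
  ⟨x, mem_level.2 ⟨hx, rfl⟩⟩

lemma negSet_level_eq_self_iff (hf : f.Odd) (hne : (level n f v).Nonempty) :
    negSet (level n f v) = level n f v ↔ v = 0 := by
  rw [negSet_level n hf]
  constructor
  · intro h
    have := eq_of_level_eq hne h.symm
    omega
  · rintro rfl
    rw [neg_zero]

/-- The `Bₙ`-partition of the letters into the level sets of an odd function. -/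
noncomputable def levelPartition (n : ℕ) (f : ℤ → ℤ) (hf : f.Odd) : BPartition n where
  blocks := (letters n).image fun x => level n f (f x)
  cover x := by
    simp only [← mem_letters, exists_mem_image, mem_level]
    exact ⟨fun hx => ⟨x, hx, hx, rfl⟩, fun ⟨_, _, hx, _⟩ => hx⟩
  nonempty := forall_mem_image.2 fun _ => level_nonempty
  disj := by
    simp only [forall_mem_image]
    intro x _ y _ hne
    refine disjoint_left.2 fun z hzx hzy => hne ?_
    rw [← (mem_level.1 hzx).2, ← (mem_level.1 hzy).2]
  closed := forall_mem_image.2 fun x hx => by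
    rw [negSet_level n hf]
    exact mem_image.2 ⟨-x, neg_mem_letters.2 hx, by rw [hf]⟩
  zeroUnique := by
    simp only [forall_mem_image]
    intro x hx y hy hx0 hy0
    rw [(negSet_level_eq_self_iff hf (level_nonempty hx)).1 hx0,
      (negSet_level_eq_self_iff hf (level_nonempty hy)).1 hy0]

lemma BPartition.eq_levelPartition {P : BPartition n} (hf : f.Odd)
    (h : ∀ C ∈ P.blocks, ∀ x ∈ C, level n f (f x) = C) : P = levelPartition n f hf := by
  refine blocks_injective (Finset.ext fun C => ⟨fun hC => ?_, fun hC => ?_⟩)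
  · obtain ⟨x, hx⟩ := P.nonempty C hC
    exact mem_image.2 ⟨x, P.mem_letters hC hx, h C hC x hx⟩
  · obtain ⟨x, hx, rfl⟩ := mem_image.1 hC
    obtain ⟨D, hD, hxD⟩ := P.exists_mem_block hx
    rwa [h D hD x hxD]

namespace IsSignedRanking

lemma level_nonempty (hf : IsSignedRanking n r f) (hv : v ∈ letters r) :
    (level n f v).Nonempty := by
  rw [_root_.mem_letters] at hv
  obtain ⟨x, rfl⟩ := hf.exists_eq hv.2
  exact _root_.level_nonempty (hf.mem_letters hv.1)

lemma nonzeroBlocks_levelPartition (hf : IsSignedRanking n r f) :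
    (levelPartition n f hf.odd).nonzeroBlocks = (letters r).image (level n f) := by
  ext C
  rw [BPartition.mem_nonzeroBlocks, mem_image]
  constructor
  · rintro ⟨hC, hne⟩
    obtain ⟨x, hx, rfl⟩ := mem_image.1 hC
    rw [Ne, negSet_level_eq_self_iff hf.odd (_root_.level_nonempty hx)] at hne
    exact ⟨f x, _root_.mem_letters.2 ⟨hne, hf.abs_le x⟩, rfl⟩
  · rintro ⟨v, hv, rfl⟩
    have hne := hf.level_nonempty hv
    rw [Ne, negSet_level_eq_self_iff hf.odd hne]
    obtain ⟨x, hx⟩ := hne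
    obtain ⟨hxn, rfl⟩ := mem_level.1 hx
    exact ⟨mem_image_of_mem (fun x => level n f (f x)) hxn, (_root_.mem_letters.1 hv).1⟩

lemma hasPairs_levelPartition (hf : IsSignedRanking n r f) :
    hasPairs (levelPartition n f hf.odd) r := by
  rw [BPartition.hasPairs_iff, hf.nonzeroBlocks_levelPartition, card_image_of_injOn, card_letters]
  exact fun u hu v _ h => eq_of_level_eq (hf.level_nonempty hu) h

lemma isListing_level (hf : IsSignedRanking n r f) :
    (levelPartition n f hf.odd).IsListing fun j : Fin r => level n f (j + 1) where
  mem j := by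
    rw [hf.nonzeroBlocks_levelPartition]
    exact mem_image_of_mem _ (add_one_mem_letters j)
  injective i j (hij : blockPair _ = blockPair _) := by
    have hne := hf.level_nonempty (add_one_mem_letters i)
    rw [blockPair_eq_iff, negSet_level n hf.odd] at hij
    rcases hij with hij | hij
    · have := eq_of_level_eq hne hij
      omega
    · have := eq_of_level_eq hne hij
      omega

end IsSignedRanking

end Levels

section ListingRank

variable {n r : ℕ} {P : BPartition n} {C : Finset ℤ} {a : Fin r → Finset ℤ} {f : ℤ → ℤ}

/-- The signed ranking attached to a listing `a 0, …, a (r − 1)` of blocks: its value is `j + 1` on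
`a j`, and `−(j + 1)` on `−a j`. -/
noncomputable def listingRank (a : Fin r → Finset ℤ) : ℤ → ℤ :=
  oddExtension a fun j => (j : ℤ) + 1

namespace BPartition.IsListing

lemma isSignedRanking_listingRank (ha : P.IsListing a) : IsSignedRanking n r (listingRank a) := by
  refine isSignedRanking_oddExtension ha.isSignedDisjoint
    (fun j x => P.mem_letters (ha.mem_blocks j)) (fun j => P.nonempty _ (ha.mem_blocks j)) ?_
    fun v hv => ?_
  · rintro _ ⟨j, rfl⟩
    constructor <;> dsimp only <;> omega
  · rw [Set.mem_Icc] at hv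
    exact ⟨⟨(v - 1).toNat, by omega⟩, by dsimp only; omega⟩

lemma listingRank_of_mem (ha : P.IsListing a) {j : Fin r} {x : ℤ} (hx : x ∈ a j) :
    listingRank a x = j + 1 :=
  oddExtension_of_mem ha.isSignedDisjoint hx

lemma listingRank_of_neg_mem (ha : P.IsListing a) {j : Fin r} {x : ℤ} (hx : -x ∈ a j) :
    listingRank a x = -(j + 1) :=
  oddExtension_of_neg_mem ha.isSignedDisjoint hx

lemma listingRank_cases (ha : P.IsListing a) (x : ℤ) :
    (∃ j, x ∈ a j ∧ listingRank a x = j + 1) ∨ (∃ j, -x ∈ a j ∧ listingRank a x = -(j + 1)) ∨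
      listingRank a x = 0 :=
  (oddExtension_cases ha.isSignedDisjoint _ x).imp_right (Or.imp_right And.right)

lemma level_listingRank (ha : P.IsListing a) (j : Fin r) :
    level n (listingRank a) (j + 1) = a j := by
  ext x
  rw [mem_level]
  constructor
  · rintro ⟨-, hx⟩
    rcases ha.listingRank_cases x with ⟨i, hi, h⟩ | ⟨i, -, h⟩ | h
    · obtain rfl : i = j := by omega
      exact hi
    · omega
    · omega
  · exact fun hx => ⟨P.mem_letters (ha.mem_blocks j) hx, ha.listingRank_of_mem hx⟩

lemma listingRank_eq_zero_iff (ha : P.IsListing a) (hP : hasPairs P r) (hC : C ∈ P.blocks)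
    {x : ℤ} (hx : x ∈ C) : listingRank a x = 0 ↔ negSet C = C := by
  constructor
  · contrapose!
    intro hne
    obtain ⟨j, rfl | rfl⟩ := ha.exists_eq_or_eq_negSet hP (mem_nonzeroBlocks.2 ⟨hC, hne⟩)
    · rw [ha.listingRank_of_mem hx]
      omega
    · rw [ha.listingRank_of_neg_mem (mem_negSet.1 hx)]
      omega
  · intro hzero
    have hnot {D : Finset ℤ} (hD : D ∈ P.nonzeroBlocks) : x ∉ D := fun hxD => by
      obtain rfl := P.eq_of_mem hC (mem_nonzeroBlocks.1 hD).1 hx hxD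
      exact (mem_nonzeroBlocks.1 hD).2 hzero
    refine oddExtension_of_notMem (fun j => hnot (ha.mem j)) fun j hj => ?_
    exact hnot (negSet_mem_nonzeroBlocks (ha.mem j)) (mem_negSet.2 hj)

lemma level_listingRank_zero (ha : P.IsListing a) (hP : hasPairs P r) (hC : C ∈ P.blocks)
    (hzero : negSet C = C) : level n (listingRank a) 0 = C := by
  ext y
  rw [mem_level]
  constructor
  · rintro ⟨hy, hy0⟩
    obtain ⟨D, hD, hyD⟩ := P.exists_mem_block hy
    rwa [P.zeroUnique C hC D hD hzero ((ha.listingRank_eq_zero_iff hP hD hyD).1 hy0)]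
  · exact fun hy => ⟨P.mem_letters hC hy, (ha.listingRank_eq_zero_iff hP hC hy).2 hzero⟩

lemma eq_levelPartition (ha : P.IsListing a) (hP : hasPairs P r) :
    P = levelPartition n (listingRank a) ha.isSignedRanking_listingRank.odd := by
  refine BPartition.eq_levelPartition _ fun C hC x hx => ?_
  by_cases hzero : negSet C = C
  · rw [(ha.listingRank_eq_zero_iff hP hC hx).2 hzero, ha.level_listingRank_zero hP hC hzero]
  obtain ⟨j, rfl | rfl⟩ := ha.exists_eq_or_eq_negSet hP (mem_nonzeroBlocks.2 ⟨hC, hzero⟩)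
  · rw [ha.listingRank_of_mem hx, ha.level_listingRank]
  · rw [ha.listingRank_of_neg_mem (mem_negSet.1 hx),
      ← negSet_level n ha.isSignedRanking_listingRank.odd, ha.level_listingRank]

end BPartition.IsListing

lemma IsSignedRanking.listingRank_level (hf : IsSignedRanking n r f) :
    listingRank (fun j : Fin r => level n f (j + 1)) = f := by
  have hpos {x : ℤ} (hx : 0 < f x) : ∃ j : Fin r, x ∈ level n f (j + 1) := by
    have hle : f x ≤ r := (le_abs_self _).trans (hf.abs_le x)
    exact ⟨⟨(f x - 1).toNat, by omega⟩, mem_level.2 ⟨hf.mem_letters hx.ne', by dsimp only; omega⟩⟩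
  refine oddExtension_eq hf.isListing_level.isSignedDisjoint hf.odd
    (fun j x hx => (mem_level.1 hx).2) fun x hx => ?_
  rcases lt_trichotomy (f x) 0 with hneg | hzero | hpos'
  · obtain ⟨j, hj⟩ := hpos (x := -x) (by rwa [hf.odd, neg_pos])
    exact absurd hj (hx j).2
  · exact hzero
  · obtain ⟨j, hj⟩ := hpos hpos'
    exact absurd hj (hx j).1

theorem BPartition.card_listed_eq_card_isSignedRanking (n r : ℕ) :
    Nat.card (Listed n r) = Nat.card {f // IsSignedRanking n r f} := by
  refine Nat.card_eq_of_bijective (fun p => ⟨_, p.2.2.isSignedRanking_listingRank⟩)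
    ⟨fun p q h => ?_, fun ⟨f, hf⟩ => ?_⟩
  · have heq : listingRank p.2.1 = listingRank q.2.1 := congrArg Subtype.val h
    refine Sigma.subtype_ext (Subtype.ext ?_) (funext fun j => ?_)
    · rw [p.2.2.eq_levelPartition p.1.2, q.2.2.eq_levelPartition q.1.2]
      simp only [heq]
    · rw [← p.2.2.level_listingRank j, ← q.2.2.level_listingRank j, heq]
  · exact ⟨⟨⟨_, hf.hasPairs_levelPartition⟩, _, hf.isListing_level⟩,
      Subtype.ext hf.listingRank_level⟩

end ListingRank

/-- `2^r · r! · S_B(n,r) = Σ_{k=0}^{r} A_B(n,k) · C(n−k, r−k)`. -/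
theorem stirling_eulerian_typeB (n r : ℕ) (h : r ≤ n) :
    2 ^ r * Nat.factorial r * SB n r =
      ∑ k ∈ Finset.range (r + 1), EulB n k * Nat.choose (n - k) (r - k) := by
  calc 2 ^ r * Nat.factorial r * SB n r
      = Nat.card (BPartition.Listed n r) := (BPartition.card_listed n r).symm
    _ = Nat.card {f // IsSignedRanking n r f} := BPartition.card_listed_eq_card_isSignedRanking n r
    _ = Nat.card {p : (Fin n → ℤ) × Finset ℕ // IsBarredPerm r p.1 p.2} :=
        (card_isBarredPerm_eq_card_isSignedRanking n r).symm
    _ = ∑ k ∈ Finset.range (r + 1), EulB n k * Nat.choose (n - k) (r - k) := card_isBarredPerm n r
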